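/- Let ζ be a joint policy and define, for each agent i, the induced state-transition kernel P_i^ζ(s̄_i | s) = ∑_{a_i ∈ A_i} P_i(s̄_i | s_{N_i}, a_i) ζ_i(a_i | s). Then for every pair i,j ∈ {1,…,n}: sup_{s_{-j}} sup_{s_j, s_j'} TV( P_i^ζ(·|s_j, s_{-j}), P_i^ζ(·|s_j', s_{-j}) ) ≤ Z^ζ_{ij} + C_{ij}. -/

import Mathlib

open scoped BigOperators

noncomputable section

namespace LPI

/-- A probability distribution on a finite type, represented as a nonnegative
function summing to one. -/
def IsDist {X : Type} [Fintype X] (d : X → ℝ) : Prop :=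
  (∀ x, 0 ≤ d x) ∧ ∑ x, d x = 1

/-- Total variation distance between two finitely supported distributions. -/
def tv {X : Type} [Fintype X] (d d' : X → ℝ) : ℝ :=
  (1 / 2) * ∑ x, |d x - d' x|

/-- A `σ`-regular distribution: positive entries with log-ratios bounded by `σ`. -/
def IsRegularDist {X : Type} (σ : ℝ) (d : X → ℝ) : Prop :=
  (∀ x, 0 < d x) ∧ ∀ x y, Real.log (d x / d y) ≤ σ

/-- A `(ν,μ)`-decay matrix with respect to a distance function. -/
def IsDecayMat {n : ℕ} (dist : Fin n → Fin n → ℕ) (ν μ : ℝ)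
    (M : Fin n → Fin n → ℝ) : Prop :=
  (∀ i j, 0 ≤ M i j) ∧
  (∀ i, ∑ j, M i j * ((dist i j : ℝ) + 1) ^ μ ≤ ν) ∧
  (∀ j, ∑ i, M i j * ((dist i j : ℝ) + 1) ^ μ ≤ ν)

variable {n : ℕ} {S A : Fin n → Type}
variable [∀ i, Fintype (S i)] [∀ i, Fintype (A i)]
variable [∀ i, DecidableEq (S i)] [∀ i, DecidableEq (A i)]
variable [∀ i, Nonempty (S i)] [∀ i, Nonempty (A i)]

/-- Probability that the joint policy `ζ` selects the joint action `a` in state `s`. -/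
def jprob (ζ : ∀ i : Fin n, (∀ j, S j) → A i → ℝ)
    (s : ∀ j, S j) (a : ∀ i, A i) : ℝ :=
  ∏ i, ζ i s (a i)

/-- Product of a tuple of local action distributions. -/
def prodd (π : ∀ i : Fin n, A i → ℝ) (a : ∀ i, A i) : ℝ :=
  ∏ i, π i (a i)

/-- A joint policy: each agent's local conditional distribution is a distribution. -/
def IsPolicy (ζ : ∀ i : Fin n, (∀ j, S j) → A i → ℝ) : Prop :=
  ∀ i s, IsDist (ζ i s)

/-- Local transition kernels are distributions. -/
def IsKernel (P : ∀ i : Fin n, (∀ j, S j) → A i → S i → ℝ) : Prop :=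
  ∀ i s a, IsDist (P i s a)

/-- The local kernel of agent `i` depends only on the states of the closed
neighborhood `N_i` of `i`. -/
def IsLocalKernel (G : SimpleGraph (Fin n))
    (P : ∀ i : Fin n, (∀ j, S j) → A i → S i → ℝ) : Prop :=
  ∀ i : Fin n, ∀ s s' : ∀ j, S j,
    (∀ j, (j = i ∨ G.Adj i j) → s j = s' j) → ∀ a, P i s a = P i s' a

/-- Factorized global transition probability `P(s'|s,a) = ∏ i P_i(s'_i|s,a_i)`. -/
def Pglob (P : ∀ i : Fin n, (∀ j, S j) → A i → S i → ℝ)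
    (s : ∀ j, S j) (a : ∀ i, A i) (s' : ∀ j, S j) : ℝ :=
  ∏ i, P i s (a i) (s' i)

/-- Global stage reward `r(s,a) = (1/n) ∑ i r_i(s_i,a_i)`. -/
def rglob (r : ∀ i : Fin n, S i → A i → ℝ) (s : ∀ j, S j) (a : ∀ i, A i) : ℝ :=
  (1 / (n : ℝ)) * ∑ i, r i (s i) (a i)

/-- Transition matrix on global states induced by joint policy `ζ`. -/
def Pmat (P : ∀ i : Fin n, (∀ j, S j) → A i → S i → ℝ)
    (ζ : ∀ i : Fin n, (∀ j, S j) → A i → ℝ) :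
    Matrix (∀ j, S j) (∀ j, S j) ℝ :=
  Matrix.of fun s s' => ∑ a : ∀ i, A i, jprob ζ s a * Pglob P s a s'

/-- Entropy-regularized one-step reward of policy `ζ`. -/
def gz (τ : ℝ) (r : ∀ i : Fin n, S i → A i → ℝ)
    (ζ : ∀ i : Fin n, (∀ j, S j) → A i → ℝ) (s : ∀ j, S j) : ℝ :=
  ∑ a : ∀ i, A i, jprob ζ s a * (rglob r s a - τ * Real.log (jprob ζ s a))

/-- Entropy-regularized value function `V^ζ = ∑_t γ^t (P^ζ)^t g^ζ`. -/
def Vz (γ τ : ℝ) (P : ∀ i : Fin n, (∀ j, S j) → A i → S i → ℝ)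
    (r : ∀ i : Fin n, S i → A i → ℝ)
    (ζ : ∀ i : Fin n, (∀ j, S j) → A i → ℝ) : (∀ j, S j) → ℝ :=
  fun s => ∑' t : ℕ, γ ^ t * ((Pmat P ζ ^ t).mulVec (gz τ r ζ)) s

/-- Objective `J(ζ) = ∑_s ρ(s) V^ζ(s)`. -/
def Jobj (γ τ : ℝ) (P : ∀ i : Fin n, (∀ j, S j) → A i → S i → ℝ)
    (r : ∀ i : Fin n, S i → A i → ℝ)
    (ζ : ∀ i : Fin n, (∀ j, S j) → A i → ℝ) (ρ : (∀ j, S j) → ℝ) : ℝ :=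
  ∑ s, ρ s * Vz γ τ P r ζ s

/-- Entropy-regularized Bellman optimal operator. -/
def bellman (γ τ : ℝ) (P : ∀ i : Fin n, (∀ j, S j) → A i → S i → ℝ)
    (r : ∀ i : Fin n, S i → A i → ℝ)
    (V : (∀ j, S j) → ℝ) : (∀ j, S j) → ℝ :=
  fun s => sSup { x : ℝ | ∃ π : ∀ i : Fin n, A i → ℝ, (∀ i, IsDist (π i)) ∧
    x = ∑ a : ∀ i, A i, prodd π a *
      (rglob r s a - τ * Real.log (prodd π a) +
        γ * ∑ s', Pglob P s a s' * V s') }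

/-- Local entropy-regularized one-step reward of agent `i`. -/
def gzi (τ : ℝ) (r : ∀ i : Fin n, S i → A i → ℝ)
    (ζ : ∀ i : Fin n, (∀ j, S j) → A i → ℝ) (i : Fin n) (s : ∀ j, S j) : ℝ :=
  ∑ a : ∀ k, A k, jprob ζ s a *
    (r i (s i) (a i) - (n : ℝ) * τ * Real.log (ζ i s (a i)))

/-- Local value function `V_i^ζ`. -/
def Vzi (γ τ : ℝ) (P : ∀ i : Fin n, (∀ j, S j) → A i → S i → ℝ)
    (r : ∀ i : Fin n, S i → A i → ℝ)
    (ζ : ∀ i : Fin n, (∀ j, S j) → A i → ℝ) (i : Fin n) : (∀ j, S j) → ℝ :=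
  fun s => ∑' t : ℕ, γ ^ t * ((Pmat P ζ ^ t).mulVec (gzi τ r ζ i)) s

/-- Local Q-function `Q_i^ζ(s,a) = r_i(s_i,a_i) + γ ∑_{s'} P(s'|s,a) V_i^ζ(s')`. -/
def Qzi (γ τ : ℝ) (P : ∀ i : Fin n, (∀ j, S j) → A i → S i → ℝ)
    (r : ∀ i : Fin n, S i → A i → ℝ)
    (ζ : ∀ i : Fin n, (∀ j, S j) → A i → ℝ) (i : Fin n)
    (s : ∀ j, S j) (a : ∀ k, A k) : ℝ :=
  r i (s i) (a i) + γ * ∑ s', Pglob P s a s' * Vzi γ τ P r ζ i s'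

/-- Global Q-function `Q^ζ(s,a) = r(s,a) + γ ∑_{s'} P(s'|s,a) V^ζ(s')`. -/
def Qglob (γ τ : ℝ) (P : ∀ i : Fin n, (∀ j, S j) → A i → S i → ℝ)
    (r : ∀ i : Fin n, S i → A i → ℝ)
    (ζ : ∀ i : Fin n, (∀ j, S j) → A i → ℝ)
    (s : ∀ j, S j) (a : ∀ k, A k) : ℝ :=
  rglob r s a + γ * ∑ s', Pglob P s a s' * Vz γ τ P r ζ s'

/-- Interaction matrix `Z^ζ` of a joint policy. -/
def Zpol (ζ : ∀ i : Fin n, (∀ j, S j) → A i → ℝ) (i j : Fin n) : ℝ :=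
  ⨆ s : ∀ k, S k, ⨆ sj : S j, tv (ζ i s) (ζ i (Function.update s j sj))

/-- Interaction matrix `Z^Q` of a tuple of local Q-functions: varying the
state-action pair of a single agent `j`. -/
def ZQ (Q : Fin n → (∀ j, S j) → (∀ j, A j) → ℝ) (i j : Fin n) : ℝ :=
  ⨆ s : ∀ k, S k, ⨆ a : ∀ k, A k, ⨆ sj : S j, ⨆ aj : A j,
    |Q i s a - Q i (Function.update s j sj) (Function.update a j aj)|

/-- Second-order interaction matrix `H^Q` of a global Q-function. -/
def HQ (Q : (∀ j, S j) → (∀ j, A j) → ℝ) (i j : Fin n) : ℝ :=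
  ⨆ s : ∀ k, S k, ⨆ a : ∀ k, A k, ⨆ si : S i, ⨆ ai : A i, ⨆ sj : S j, ⨆ aj : A j,
    |(Q s a - Q (Function.update s i si) (Function.update a i ai)) -
      (Q (Function.update s j sj) (Function.update a j aj) -
        Q (Function.update (Function.update s i si) j sj)
          (Function.update (Function.update a i ai) j aj))|

/-- The matrix `C` measuring interaction strength of the transition kernels. -/
def Cmat (G : SimpleGraph (Fin n)) [DecidableRel G.Adj]
    (P : ∀ i : Fin n, (∀ j, S j) → A i → S i → ℝ) (i j : Fin n) : ℝ :=
  if j = i then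
    ⨆ s : ∀ k, S k, ⨆ si' : S i, ⨆ ai : A i, ⨆ ai' : A i,
      tv (P i s ai) (P i (Function.update s i si') ai')
  else if G.Adj i j then
    ⨆ s : ∀ k, S k, ⨆ sj' : S j, ⨆ ai : A i,
      tv (P i s ai) (P i (Function.update s j sj') ai)
  else 0

/-- A `σ`-regular joint policy. -/
def IsRegularPolicy (σ : ℝ) (ζ : ∀ i : Fin n, (∀ j, S j) → A i → ℝ) : Prop :=
  ∀ i s, IsRegularDist σ (ζ i s)

/-- A `(ν,μ)`-decay joint policy. -/
def IsDecayPolicy (dist : Fin n → Fin n → ℕ) (ν μ : ℝ)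
    (ζ : ∀ i : Fin n, (∀ j, S j) → A i → ℝ) : Prop :=
  IsDecayMat dist ν μ (Zpol ζ)

/-- The policy class `Δ_{ν,μ,σ}`. -/
def InDelta (dist : Fin n → Fin n → ℕ) (ν μ σ : ℝ)
    (ζ : ∀ i : Fin n, (∀ j, S j) → A i → ℝ) : Prop :=
  IsPolicy ζ ∧ IsDecayPolicy dist ν μ ζ ∧ IsRegularPolicy σ ζ

/-- A `κ`-hop localized joint policy. -/
def IsKHop (G : SimpleGraph (Fin n)) (κ : ℕ)
    (ζ : ∀ i : Fin n, (∀ j, S j) → A i → ℝ) : Prop :=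
  ∀ i : Fin n, ∀ s s' : ∀ j, S j,
    (∀ j, G.dist i j ≤ κ → s j = s' j) → ζ i s = ζ i s'

/-- The largest local action space cardinality `A_max`. -/
def Amax (A : Fin n → Type) [∀ i, Fintype (A i)] : ℕ :=
  Finset.univ.sup fun i => Fintype.card (A i)

/-- An irreducible stochastic matrix on a finite set. -/
def MatIrreducible {X : Type} [Fintype X] [DecidableEq X] (M : Matrix X X ℝ) : Prop :=
  ∀ s s', ∃ t : ℕ, 1 ≤ t ∧ 0 < (M ^ t) s s'

/-- An aperiodic stochastic matrix: for each state `s`, the only common divisor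
of the return times is `1` (i.e. `gcd {t ≥ 1 | (M^t)_{ss} > 0} = 1`). -/
def MatAperiodic {X : Type} [Fintype X] [DecidableEq X] (M : Matrix X X ℝ) : Prop :=
  ∀ s, ∀ d : ℕ, (∀ t : ℕ, 1 ≤ t → 0 < (M ^ t) s s → d ∣ t) → d = 1

/-- A stationary distribution of a transition matrix. -/
def IsStationary {X : Type} [Fintype X] (M : Matrix X X ℝ) (μ : X → ℝ) : Prop :=
  IsDist μ ∧ Matrix.vecMul μ M = μ


/-- The state-transition kernel of agent `i` induced by policy `ζ`:
`P_i^ζ(s̄_i | s) = ∑_{a_i} P_i(s̄_i | s, a_i) ζ_i(a_i | s)`. -/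
def PziKer {n : ℕ} {S A : Fin n → Type}
    [∀ i, Fintype (S i)] [∀ i, Fintype (A i)]
    (P : ∀ i : Fin n, (∀ j, S j) → A i → S i → ℝ)
    (ζ : ∀ i : Fin n, (∀ j, S j) → A i → ℝ)
    (i : Fin n) (s : ∀ j, S j) (si' : S i) : ℝ :=
  ∑ ai : A i, P i s ai si' * ζ i s ai

/-!
Writing `u K` for the action of a kernel `K` on a row vector `u`, the induced kernel is
`P_i^ζ(·|s) = ζ_i(·|s) P_i(·|s, ·)`. Change the state `s` to `s'` one factor at a time, passing
through the mixture of the old kernel `P_i(·|s, ·)` by the new policy `ζ_i(·|s')`. Changing the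
policy costs at most `TV(ζ_i(·|s), ζ_i(·|s')) ≤ Z_ij`, since a kernel contracts total variation;
changing the kernel costs at most the `ζ_i(·|s')`-average over `a` of
`TV(P_i(·|s, a), P_i(·|s', a)) ≤ C_ij`. Both costs are instances of
`‖w M‖₁ ≤ ∑ x, |w x| ‖M x‖₁`, with `w` a difference of policies or `M` a difference of kernels.
-/

open scoped Matrix

theorem sum_abs_vecMul_le {X Y R : Type*} [Fintype X] [Fintype Y]
    [Ring R] [LinearOrder R] [IsOrderedRing R] (w : X → R) (M : Matrix X Y R) :
    ∑ y, |(w ᵥ* M) y| ≤ ∑ x, |w x| * ∑ y, |M x y| :=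
  calc ∑ y, |(w ᵥ* M) y|
      ≤ ∑ y, ∑ x, |w x * M x y| :=
        Finset.sum_le_sum fun _ _ => Finset.abs_sum_le_sum_abs _ _
    _ = ∑ x, |w x| * ∑ y, |M x y| := by
        rw [Finset.sum_comm]
        simp only [abs_mul, Finset.mul_sum]

theorem IsDist.sum_abs_eq_one {X : Type} [Fintype X] {d : X → ℝ} (hd : IsDist d) :
    ∑ x, |d x| = 1 := by
  simpa only [abs_of_nonneg (hd.1 _)] using hd.2

section TotalVariation

variable {X Y : Type} [Fintype X] [Fintype Y]

theorem tv_nonneg (d d' : X → ℝ) : 0 ≤ tv d d' := by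
  unfold tv
  positivity

theorem tv_self (d : X → ℝ) : tv d d = 0 := by
  simp [tv]

theorem tv_triangle (p q r : X → ℝ) : tv p r ≤ tv p q + tv q r := by
  unfold tv
  rw [← mul_add, ← Finset.sum_add_distrib]
  gcongr
  exact abs_sub_le _ _ _

theorem tv_vecMul_le_tv {K : Matrix X Y ℝ} (hK : ∀ x, ∑ y, |K x y| ≤ 1) (u v : X → ℝ) :
    tv (u ᵥ* K) (v ᵥ* K) ≤ tv u v := by
  unfold tv
  gcongr
  calc ∑ y, |(u ᵥ* K) y - (v ᵥ* K) y|
      ≤ ∑ x, |u x - v x| * ∑ y, |K x y| := by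
        simpa only [Matrix.sub_vecMul, Pi.sub_apply] using sum_abs_vecMul_le (u - v) K
    _ ≤ ∑ x, |u x - v x| :=
        Finset.sum_le_sum fun x _ => mul_le_of_le_one_right (abs_nonneg _) (hK x)

theorem tv_vecMul_le_sum_mul_tv (w : X → ℝ) (K L : Matrix X Y ℝ) :
    tv (w ᵥ* K) (w ᵥ* L) ≤ ∑ x, |w x| * tv (K x) (L x) := by
  have h_diff : ∑ y, |(w ᵥ* K) y - (w ᵥ* L) y| ≤ ∑ x, |w x| * ∑ y, |K x y - L x y| := by
    simpa only [Matrix.vecMul_sub, Pi.sub_apply, Matrix.sub_apply] using sum_abs_vecMul_le w (K - L)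
  simp only [tv, mul_left_comm _ (1 / 2 : ℝ), ← Finset.mul_sum]
  gcongr

theorem tv_vecMul_le_of_forall_tv_le {w : X → ℝ} (hw : ∑ x, |w x| ≤ 1) {K L : Matrix X Y ℝ}
    {c : ℝ} (hc : 0 ≤ c) (hKL : ∀ x, tv (K x) (L x) ≤ c) :
    tv (w ᵥ* K) (w ᵥ* L) ≤ c :=
  calc tv (w ᵥ* K) (w ᵥ* L)
      ≤ ∑ x, |w x| * tv (K x) (L x) := tv_vecMul_le_sum_mul_tv w K L
    _ ≤ ∑ x, |w x| * c := by gcongr with x; exact hKL x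
    _ = (∑ x, |w x|) * c := (Finset.sum_mul ..).symm
    _ ≤ c := mul_le_of_le_one_left hc hw

end TotalVariation

theorem tv_update_le_Zpol {n : ℕ} {S A : Fin n → Type} [∀ i, Finite (S i)] [∀ i, Fintype (A i)]
    (ζ : ∀ i : Fin n, (∀ j, S j) → A i → ℝ) (i j : Fin n) (s : ∀ k, S k) (sj : S j) :
    tv (ζ i s) (ζ i (Function.update s j sj)) ≤ Zpol ζ i j :=
  Finite.le_ciSup_of_le s <| Finite.le_ciSup_of_le sj le_rfl

theorem Cmat_nonneg {n : ℕ} {S A : Fin n → Type} [∀ i, Fintype (S i)]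
    (G : SimpleGraph (Fin n)) [DecidableRel G.Adj]
    (P : ∀ i : Fin n, (∀ j, S j) → A i → S i → ℝ) (i j : Fin n) :
    0 ≤ Cmat G P i j := by
  unfold Cmat
  split_ifs
  · exact Real.iSup_nonneg fun _ => Real.iSup_nonneg fun _ => Real.iSup_nonneg fun _ =>
      Real.iSup_nonneg fun _ => tv_nonneg _ _
  · exact Real.iSup_nonneg fun _ => Real.iSup_nonneg fun _ => Real.iSup_nonneg fun _ =>
      tv_nonneg _ _
  · exact le_rfl

theorem IsLocalKernel.apply_update_eq {n : ℕ} {S A : Fin n → Type} {G : SimpleGraph (Fin n)}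
    {P : ∀ i : Fin n, (∀ j, S j) → A i → S i → ℝ} (hP : IsLocalKernel G P) {i j : Fin n}
    (hji : j ≠ i) (hij : ¬G.Adj i j) (s : ∀ k, S k) (sj : S j) (a : A i) :
    P i (Function.update s j sj) a = P i s a := by
  refine hP i _ _ (fun k hk => Function.update_of_ne ?_ sj s) a
  rintro rfl
  exact hk.elim hji hij

theorem IsLocalKernel.tv_update_le_Cmat {n : ℕ} {S A : Fin n → Type} [∀ i, Fintype (S i)]
    [∀ i, Finite (A i)] {G : SimpleGraph (Fin n)} [DecidableRel G.Adj]
    {P : ∀ i : Fin n, (∀ j, S j) → A i → S i → ℝ} (hP : IsLocalKernel G P) (i j : Fin n)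
    (s : ∀ k, S k) (sj : S j) (a : A i) :
    tv (P i s a) (P i (Function.update s j sj) a) ≤ Cmat G P i j := by
  unfold Cmat
  split_ifs with hji hij
  · subst hji
    exact Finite.le_ciSup_of_le s <| Finite.le_ciSup_of_le sj <| Finite.le_ciSup_of_le a <|
      Finite.le_ciSup_of_le a le_rfl
  · exact Finite.le_ciSup_of_le s <| Finite.le_ciSup_of_le sj <| Finite.le_ciSup_of_le a le_rfl
  · rw [hP.apply_update_eq hji hij, tv_self]

theorem PziKer_eq_vecMul {n : ℕ} {S A : Fin n → Type} [∀ i, Fintype (S i)] [∀ i, Fintype (A i)]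
    (P : ∀ i : Fin n, (∀ j, S j) → A i → S i → ℝ) (ζ : ∀ i : Fin n, (∀ j, S j) → A i → ℝ)
    (i : Fin n) (s : ∀ j, S j) :
    PziKer P ζ i s = ζ i s ᵥ* Matrix.of (P i s) :=
  funext fun _ => Finset.sum_congr rfl fun _ _ => mul_comm _ _

theorem stmt_9_general {n : ℕ} {S A : Fin n → Type} [∀ i, Fintype (S i)] [∀ i, Fintype (A i)]
    {G : SimpleGraph (Fin n)} [DecidableRel G.Adj]
    {P : ∀ i : Fin n, (∀ j, S j) → A i → S i → ℝ} (hP : ∀ i s a, ∑ si, |P i s a si| ≤ 1)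
    (hPloc : IsLocalKernel G P) {ζ : ∀ i : Fin n, (∀ j, S j) → A i → ℝ}
    (hζ : ∀ i s, ∑ a, |ζ i s a| ≤ 1) (i j : Fin n) (s : ∀ k, S k) (sj' : S j) :
    tv (PziKer P ζ i s) (PziKer P ζ i (Function.update s j sj')) ≤
      Zpol ζ i j + Cmat G P i j := by
  set s' := Function.update s j sj'
  have h_policy : tv (ζ i s ᵥ* Matrix.of (P i s)) (ζ i s' ᵥ* Matrix.of (P i s)) ≤ Zpol ζ i j :=
    (tv_vecMul_le_tv (hP i s) _ _).trans (tv_update_le_Zpol ζ i j s sj')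
  have h_kernel : tv (ζ i s' ᵥ* Matrix.of (P i s)) (ζ i s' ᵥ* Matrix.of (P i s')) ≤
      Cmat G P i j :=
    tv_vecMul_le_of_forall_tv_le (hζ i s') (Cmat_nonneg G P i j)
      (hPloc.tv_update_le_Cmat i j s sj')
  rw [PziKer_eq_vecMul, PziKer_eq_vecMul]
  exact (tv_triangle _ _ _).trans (add_le_add h_policy h_kernel)

/-- for the induced state-transition kernels `P_i^ζ`, varying the state of
a single agent `j` changes `P_i^ζ(·|s)` by at most `Z^ζ_{ij} + C_{ij}` in total variation. -/
theorem stmt_9 {n : ℕ} (G : SimpleGraph (Fin n)) [DecidableRel G.Adj]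
    (S A : Fin n → Type)
    [∀ i, Fintype (S i)] [∀ i, Fintype (A i)]
    [∀ i, DecidableEq (S i)] [∀ i, DecidableEq (A i)]
    [∀ i, Nonempty (S i)] [∀ i, Nonempty (A i)]
    (P : ∀ i : Fin n, (∀ j, S j) → A i → S i → ℝ)
    (hP : IsKernel P) (hPloc : IsLocalKernel G P)
    (ζ : ∀ i : Fin n, (∀ j, S j) → A i → ℝ) (hζ : IsPolicy ζ) :
    ∀ (i j : Fin n) (s : ∀ k, S k) (sj' : S j),
      tv (PziKer P ζ i s) (PziKer P ζ i (Function.update s j sj')) ≤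
        Zpol ζ i j + Cmat G P i j :=
  stmt_9_general (fun i s a => (hP i s a).sum_abs_eq_one.le) hPloc
    fun i s => (hζ i s).sum_abs_eq_one.le

end LPI
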